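/- arXiv:1311.1594 — 2 statements merged into one kernel-verified Lean document; each statement's English description precedes it below -/
import Mathlib

section
/- Let v be a sequence with k ≥ ||v|| and let r ≥ 1. Then there exists a constant c > 0 (depending only on r, v and k) such that for all n, Ex_r(v,n) ≤ c·Ex_r(v,k,n); moreover Ex_r(v,k,n) ≤ Ex_r(v,n) for all n. -/
/-- `u` is `(k,r)`-sparse: for every `j`, the letters at positions
`j, j+r, ..., j+(k-1)r` (those within range) are pairwise distinct. -/
def ArithSparse (k r : ℕ) (u : List ℕ) : Prop :=
  ∀ j a b : ℕ, a < b → b < k → j + b * r < u.length →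
    u.getD (j + a * r) 0 ≠ u.getD (j + b * r) 0

/-- Two sequences are isomorphic if one is obtained from the other by a
bijective renaming of letters. -/
def Isomorphic (u v : List ℕ) : Prop := ∃ β : ℕ ≃ ℕ, v = u.map β

/-- `u` contains `v` if `u` has a subsequence isomorphic to `v`. -/
def Contains (u v : List ℕ) : Prop := ∃ w : List ℕ, w.Sublist u ∧ Isomorphic w v

/-- `Ex v k r n` is the maximum length of a `v`-free, `(k,r)`-sparse sequence
using at most `n` distinct letters. -/
noncomputable def Ex (v : List ℕ) (k r n : ℕ) : ℕ :=
  sSup {l : ℕ | ∃ u : List ℕ,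
    u.length = l ∧ ¬ Contains u v ∧ ArithSparse k r u ∧ u.toFinset.card ≤ n}

/-! The key fact is that a `v`-free `(‖v‖, r)`-sparse sequence over few letters is short. Cut it
into blocks of length `‖v‖ * r`; each block shows at least `‖v‖` distinct letters, so if there are
many blocks, some `‖v‖`-set `T` of letters is contained in `|v|` of them, and picking one letter
from each spells out a copy of `v` over `T`.

Given a `v`-free `(‖v‖, r)`-sparse sequence `u`, thin it greedily from the right, dropping each
letter that occurs among the `d` letters kept last. The result is `(d + 1, 1)`-sparse, hence
`(k, r)`-sparse when `d = k * r`. Between two kept letters only letters of a window of size `d` are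
dropped, so by the key fact each kept letter accounts for boundedly many letters of `u`. -/

theorem toFinset_subset_toFinset {α : Type*} [DecidableEq α] {l l' : List α} (h : l ⊆ l') :
    l.toFinset ⊆ l'.toFinset :=
  Multiset.toFinset_subset.2 h

section Blocks

variable {α β γ : Type*}

theorem exists_perm_image_eq [DecidableEq α] {S T : Finset α} (h : S.card = T.card) :
    ∃ g : Equiv.Perm α, S.image g = T := by
  have := Set.powersetCard.isPretransitive (α := α) (n := T.card)
  obtain ⟨g, hg⟩ := MulAction.exists_smul_eq (Equiv.Perm α)
    (⟨S, h⟩ : Set.powersetCard α T.card) ⟨T, rfl⟩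
  exact ⟨g, congrArg Subtype.val hg⟩

theorem exists_lt_length_filter_fiber [DecidableEq γ] {f : β → γ} {P : Finset γ} {L : List β}
    {m : ℕ} (hf : ∀ x ∈ L, f x ∈ P) (hm : P.card * m < L.length) :
    ∃ y ∈ P, m < (L.filter (f · = y)).length := by
  have hsum : ∑ y ∈ P, (L.filter (f · = y)).length = L.length := by
    simpa [List.count, List.filter_map, List.countP_eq_length_filter, Function.comp_def,
      beq_eq_decide] using
      Multiset.sum_count_eq_card (s := P) (m := (L.map f : Multiset γ)) (by simpa using hf)
  have hlt : ∑ _y ∈ P, m < ∑ y ∈ P, (L.filter (f · = y)).length := by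
    rwa [hsum, Finset.sum_const, smul_eq_mul]
  exact Finset.exists_lt_of_sum_lt hlt

theorem sublist_flatten_of_forall_mem {w : List α} {L : List (List α)}
    (hmem : ∀ l ∈ L, ∀ x ∈ w, x ∈ l) (hlen : w.length ≤ L.length) : w.Sublist L.flatten := by
  induction L generalizing w with
  | nil => simp_all
  | cons l L ih =>
    cases w with
    | nil => exact List.nil_sublist _
    | cons a w =>
      simp only [List.forall_mem_cons] at hmem
      exact (List.singleton_sublist.2 hmem.1.1).append
        (ih (fun l hl => (hmem.2 l hl).2) (Nat.le_of_succ_le_succ hlen))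

theorem exists_flatten_prefix_of_mul_le_length {u : List α} {N m : ℕ} (h : N * m ≤ u.length) :
    ∃ L : List (List α), L.length = N ∧ L.flatten <+: u ∧ ∀ l ∈ L, l.length = m := by
  have hlen : (u.take (N * m)).length = (List.replicate N m).sum := by simpa using h
  refine ⟨(List.replicate N m).splitLengths (u.take (N * m)), by simp, ?_, fun l hl => ?_⟩
  · rw [List.flatten_splitLengths _ _ hlen.le]
    exact List.take_prefix _ _
  · have := List.mem_map_of_mem (f := List.length) hl
    rw [List.map_splitLengths_length _ _ hlen.ge] at this
    exact List.eq_of_mem_replicate this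

end Blocks

section GreedyThinning

variable {α : Type*} [DecidableEq α]

/-- The greedy subsequence of `u` in which any `d + 1` consecutive letters are distinct: scanning
from the right, a letter is dropped when it is among the `d` letters kept most recently. -/
def greedyThin (d : ℕ) : List α → List α
  | [] => []
  | a :: u => if a ∈ (greedyThin d u).take d then greedyThin d u else a :: greedyThin d u

theorem greedyThin_sublist (d : ℕ) (u : List α) : (greedyThin d u).Sublist u := by
  induction u with
  | nil => exact List.Sublist.refl _
  | cons a u ih =>
    rw [greedyThin]
    split_ifs
    · exact ih.cons a
    · exact ih.cons_cons a

/-- For the induction, `p` carries the run of letters immediately to the left of `u` that are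
already known to be dropped. -/
theorem length_append_le_mul_length_greedyThin {d M : ℕ} (u p : List α)
    (hp : p ⊆ (greedyThin d u).take d)
    (hM : ∀ w : List α, w <:+: p ++ u → w.toFinset.card ≤ d + 1 → w.length ≤ M) :
    (p ++ u).length ≤ M * (greedyThin d u).length := by
  induction u generalizing p with
  | nil => simp_all [greedyThin]
  | cons a u ih =>
    by_cases ha : a ∈ (greedyThin d u).take d
    · rw [greedyThin, if_pos ha] at hp ⊢
      rw [List.append_cons] at hM ⊢
      exact ih (p ++ [a]) (List.append_subset.2 ⟨hp, by simpa using ha⟩) hM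
    · rw [greedyThin, if_neg ha] at hp ⊢
      have hcard : (p ++ [a]).toFinset.card ≤ d + 1 := by
        have hsub : p ++ [a] ⊆ (a :: greedyThin d u).take (d + 1) :=
          List.append_subset.2
            ⟨List.Subset.trans hp (List.take_subset_take_left _ d.le_succ), by simp⟩
        calc (p ++ [a]).toFinset.card
            ≤ ((a :: greedyThin d u).take (d + 1)).toFinset.card :=
              Finset.card_le_card (toFinset_subset_toFinset hsub)
          _ ≤ ((a :: greedyThin d u).take (d + 1)).length := List.toFinset_card_le _
          _ ≤ d + 1 := List.length_take_le _ _
      have hrun : (p ++ [a]).length ≤ M := hM _ ⟨[], u, by simp⟩ hcard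
      have hrest : u.length ≤ M * (greedyThin d u).length :=
        ih [] (List.nil_subset _) fun w hw =>
          hM w (hw.trans ⟨p ++ [a], [], by simp⟩)
      calc (p ++ a :: u).length
          = u.length + (p ++ [a]).length := by rw [List.append_cons, List.length_append, add_comm]
        _ ≤ M * (greedyThin d u).length + M := Nat.add_le_add hrest hrun
        _ = M * (a :: greedyThin d u).length := by rw [List.length_cons, Nat.mul_succ]

theorem length_le_mul_length_greedyThin {d M : ℕ} {u : List α}
    (hM : ∀ w : List α, w <:+: u → w.toFinset.card ≤ d + 1 → w.length ≤ M) :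
    u.length ≤ M * (greedyThin d u).length :=
  length_append_le_mul_length_greedyThin u [] (List.nil_subset _) hM

end GreedyThinning

theorem Contains.mono {u u' v : List ℕ} (hc : Contains u v) (h : u.Sublist u') : Contains u' v :=
  let ⟨w, hw, hi⟩ := hc
  ⟨w, hw.trans h, hi⟩

theorem contains_flatten {v : List ℕ} {L : List (List ℕ)} {T : Finset ℕ}
    (hT : T.card = v.toFinset.card) (hL : ∀ l ∈ L, T ⊆ l.toFinset) (hlen : v.length ≤ L.length) :
    Contains L.flatten v := by
  obtain ⟨g, rfl⟩ := exists_perm_image_eq hT.symm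
  refine ⟨v.map g, sublist_flatten_of_forall_mem (fun l hl x hx => ?_) (by simpa using hlen),
    g.symm, by simp⟩
  exact List.mem_toFinset.1 (hL l hl (by simpa using hx))

namespace ArithSparse

variable {k k' r : ℕ} {u w : List ℕ}

theorem mono (h : ArithSparse k' r u) (hk : k ≤ k') : ArithSparse k r u :=
  fun j a b hab hb => h j a b hab (hb.trans_le hk)

theorem of_isInfix (h : ArithSparse k r u) (hw : w <:+: u) : ArithSparse k r w := by
  obtain ⟨s, t, rfl⟩ := hw
  intro j a b hab hb hlt
  have hlt' : j + a * r < w.length :=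
    (Nat.add_le_add_left (Nat.mul_le_mul_right r hab.le) j).trans_lt hlt
  have hshift : ∀ i < w.length, (s ++ w ++ t).getD (s.length + i) 0 = w.getD i 0 := by
    intro i hi
    rw [List.append_assoc, List.getD_append_right _ _ _ _ (Nat.le_add_right _ _),
      Nat.add_sub_cancel_left, List.getD_append _ _ _ _ hi]
  have hne := h (s.length + j) a b hab hb (by simp only [List.length_append]; omega)
  rwa [add_assoc, add_assoc, hshift _ hlt', hshift _ hlt] at hne

theorem of_one (hr : 0 < r) (h : ArithSparse k' 1 u) (hk : k * r ≤ k') : ArithSparse k r u := by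
  intro j a b hab hb hlt
  have hbr : b * r < k' := (Nat.mul_lt_mul_of_pos_right hb hr).trans_le hk
  simpa using h j (a * r) (b * r) (Nat.mul_lt_mul_of_pos_right hab hr) hbr (by simpa using hlt)

theorem le_card_toFinset (hr : 0 < r) (h : ArithSparse k r u) (hlen : k * r ≤ u.length) :
    k ≤ u.toFinset.card := by
  have hlt (a : Fin k) : a * r < u.length :=
    (Nat.mul_lt_mul_of_pos_right a.isLt hr).trans_le hlen
  have hmem (a : Fin k) : u.getD (a * r) 0 ∈ u.toFinset := by
    rw [List.getD_eq_getElem _ _ (hlt a), List.mem_toFinset]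
    exact List.getElem_mem _
  have hinj : Function.Injective fun a : Fin k => u.getD (a * r) 0 :=
    .of_lt_imp_ne fun a b hab => by simpa using h 0 a b hab b.isLt (by simpa using hlt b)
  simpa using Finset.card_le_card_of_injOn (s := Finset.univ) _ (fun a _ => hmem a) hinj.injOn

theorem cons {d a : ℕ} (h : ArithSparse (d + 1) 1 u) (ha : a ∉ u.take d) :
    ArithSparse (d + 1) 1 (a :: u) := by
  intro j x y hxy hy hlt
  simp only [mul_one, List.length_cons] at hlt ⊢
  obtain ⟨e, rfl⟩ := Nat.exists_eq_add_of_lt hxy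
  rcases j with _ | j
  · rcases x with _ | x
    · have he : e < u.length := by omega
      intro hae
      refine ha (List.mem_take_iff_getElem.2 ⟨e, by omega, ?_⟩)
      simpa [he] using hae.symm
    · simpa [Nat.add_right_comm] using h 0 x (x + e + 1) (by omega) (by omega) (by omega)
  · simp only [Nat.succ_add j]
    simpa using h j x (x + e + 1) hxy hy (by omega)

end ArithSparse

theorem arithSparse_greedyThin (d : ℕ) (u : List ℕ) : ArithSparse (d + 1) 1 (greedyThin d u) := by
  induction u with
  | nil => simp [ArithSparse, greedyThin]
  | cons a u ih =>
    rw [greedyThin]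
    split_ifs with ha
    · exact ih
    · exact ih.cons ha

/-- A length that forces a `(‖v‖, r)`-sparse sequence over at most `n` letters to contain `v`:
so many blocks of length `‖v‖ * r` that some `‖v‖`-set of letters is contained in `|v|` of them. -/
def containmentLength (v : List ℕ) (r n : ℕ) : ℕ :=
  (n.choose v.toFinset.card * v.length + 1) * (v.toFinset.card * r)

section Ex

variable {v u : List ℕ} {k s r n : ℕ}

theorem contains_of_containmentLength_le (hr : 0 < r) (hsp : ArithSparse v.toFinset.card r u)
    (hn : u.toFinset.card ≤ n) (hlen : containmentLength v r n ≤ u.length) : Contains u v := by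
  obtain ⟨L, hL, hpre, hblock⟩ := exists_flatten_prefix_of_mul_le_length hlen
  have hsub : ∀ l ∈ L, ∃ T ∈ u.toFinset.powersetCard v.toFinset.card, T ⊆ l.toFinset := by
    intro l hl
    have hlu : l <:+: u := (List.infix_of_mem_flatten hl).trans hpre.isInfix
    obtain ⟨T, hTl, hT⟩ := Finset.exists_subset_card_eq
      ((hsp.of_isInfix hlu).le_card_toFinset hr (hblock l hl).ge)
    exact ⟨T, Finset.mem_powersetCard.2 ⟨hTl.trans (toFinset_subset_toFinset hlu.subset), hT⟩, hTl⟩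
  choose! f hfP hfl using hsub
  have hmany : (u.toFinset.powersetCard v.toFinset.card).card * v.length < L.length := by
    rw [hL, Finset.card_powersetCard, Nat.lt_succ_iff]
    exact Nat.mul_le_mul_right _ (Nat.choose_le_choose _ hn)
  obtain ⟨T, hT, hTL⟩ := exists_lt_length_filter_fiber hfP hmany
  have hcontains : Contains (L.filter (f · = T)).flatten v := by
    refine contains_flatten (Finset.mem_powersetCard.1 hT).2 (fun l hl => ?_) hTL.le
    obtain ⟨hl, hfT⟩ := List.mem_filter.1 hl
    exact of_decide_eq_true hfT ▸ hfl l hl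
  exact hcontains.mono (List.filter_sublist.flatten.trans hpre.sublist)

theorem length_le_containmentLength (hr : 0 < r) (hk : v.toFinset.card ≤ k)
    (hfree : ¬ Contains u v) (hsp : ArithSparse k r u) (hn : u.toFinset.card ≤ n) :
    u.length ≤ containmentLength v r n := by
  by_contra! hlt
  exact hfree (contains_of_containmentLength_le hr (hsp.mono hk) hn hlt.le)

theorem ex_le {B : ℕ} (h : ∀ u : List ℕ, ¬ Contains u v → ArithSparse k r u →
    u.toFinset.card ≤ n → u.length ≤ B) : Ex v k r n ≤ B :=
  csSup_le' fun _ ⟨u, hlen, hfree, hsp, hn⟩ => hlen ▸ h u hfree hsp hn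

theorem length_le_ex (hr : 0 < r) (hk : v.toFinset.card ≤ k)
    (hfree : ¬ Contains u v) (hsp : ArithSparse k r u) (hn : u.toFinset.card ≤ n) :
    u.length ≤ Ex v k r n := by
  refine le_csSup ⟨containmentLength v r n, ?_⟩ ⟨u, rfl, hfree, hsp, hn⟩
  rintro _ ⟨u, rfl, hfree, hsp, hn⟩
  exact length_le_containmentLength hr hk hfree hsp hn

theorem ex_anti (hr : 0 < r) (hs : v.toFinset.card ≤ s) (hsk : s ≤ k) :
    Ex v k r n ≤ Ex v s r n :=
  ex_le fun _ hfree hsp hn => length_le_ex hr hs hfree (hsp.mono hsk) hn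

theorem ex_le_containmentLength_mul_ex (hr : 0 < r) (hs : v.toFinset.card ≤ s)
    (hk : v.toFinset.card ≤ k) :
    Ex v s r n ≤ containmentLength v r (k * r + 1) * Ex v k r n := by
  refine ex_le fun u hfree hsp hn => ?_
  have hthin : (greedyThin (k * r) u).Sublist u := greedyThin_sublist _ _
  calc u.length
      ≤ containmentLength v r (k * r + 1) * (greedyThin (k * r) u).length :=
        length_le_mul_length_greedyThin fun w hw hcard =>
          length_le_containmentLength hr hs (fun hc => hfree (hc.mono hw.sublist))
            (hsp.of_isInfix hw) hcard
    _ ≤ containmentLength v r (k * r + 1) * Ex v k r n := by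
        refine Nat.mul_le_mul_left _ (length_le_ex hr hk (fun hc => hfree (hc.mono hthin))
          ((arithSparse_greedyThin _ _).of_one hr (Nat.le_succ _)) ?_)
        exact (Finset.card_le_card (toFinset_subset_toFinset hthin.subset)).trans hn

end Ex

theorem stmt_1 (v : List ℕ) (k r : ℕ) (hk : v.toFinset.card ≤ k) (hr : 1 ≤ r) :
    (∃ c : ℕ, 0 < c ∧ ∀ n : ℕ, Ex v v.toFinset.card r n ≤ c * Ex v k r n) ∧
    ∀ n : ℕ, Ex v k r n ≤ Ex v v.toFinset.card r n := by
  refine ⟨⟨containmentLength v r (k * r + 1) + 1, Nat.succ_pos _, fun n => ?_⟩, fun n => ?_⟩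
  · exact (ex_le_containmentLength_mul_ex hr le_rfl hk).trans
      (Nat.mul_le_mul_right _ (Nat.le_succ _))
  · exact ex_anti hr le_rfl hk
end

section
/- Let a ≠ b be two letters, k ≥ 2 and r ≥ 5. Then for every n ≥ 1, Ex_r(abba,k,n) = r·n. -/
/-!
Write `f_x` for the first occurrence of a letter `x` in a word `w` of length `L` that avoids
`abba` and has no two equal letters at distance `r`. The positions of `x` in `[f_x, f_x + r)`
are *leading*; there are at most `r` of them, and every other position of `x` is `q + r` with
`f_x < q`, so that `q` lies strictly between two occurrences of `x` and carries another letter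
`z`. It remains to charge each such *enclosed* position `q` to a letter so that leading
positions and charges together number at most `r` per letter. Avoiding `abba` forces all other
occurrences of `z` to lie outside the span of `x`, and on one side of it only. If at most one of
them precedes `q`, charge `q` to `z`: then `z` occurs once among its leading positions or just
twice in total, which leaves room. Otherwise charge `q` to `x`: this happens at most once per
`x`, and then `f_x + 1` is not an occurrence of `x`.
-/

open Finset

section Words

variable {α : Type*} {w : ℕ → α} {L r : ℕ}

/-- The word `w 0, …, w (L - 1)` avoids the pattern `abba`. -/
def AbbaFree (w : ℕ → α) (L : ℕ) : Prop :=
  ∀ ⦃i j k l : ℕ⦄, i < j → j < k → k < l → l < L → w i = w l → w j = w k → w i = w j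

/-- The word `w 0, …, w (L - 1)` is `(2, r)`-sparse: no two equal letters at distance `r`. -/
def TwoSparse (w : ℕ → α) (L r : ℕ) : Prop :=
  ∀ ⦃j : ℕ⦄, j + r < L → w j ≠ w (j + r)

theorem AbbaFree.lt_or_lt_of_mem_span (hw : AbbaFree w L) {f l q i : ℕ} (hfq : f < q) (hql : q < l)
    (hl : l < L) (hfl : w f = w l) (hne : w q ≠ w f) (hi : w i = w q) (hiq : i ≠ q) :
    i < f ∨ l < i := by
  by_contra! ⟨hfi, hil⟩
  have hif : i ≠ f := by rintro rfl; exact hne hi.symm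
  have hil' : i ≠ l := by rintro rfl; exact hne (hi.symm.trans hfl.symm)
  rcases lt_or_gt_of_ne hiq with hlt | hgt
  · exact hne ((hw (by omega) hlt hql hl hfl hi).trans hi).symm
  · exact hne (hw hfq hgt (by omega) hl hfl hi.symm).symm

theorem AbbaFree.eq_of_mem_span (hw : AbbaFree w L) {f l p q : ℕ} (hfp : f < p) (hpl : p < l)
    (hfq : f < q) (hql : q < l) (hl : l < L) (hfl : w f = w l) (hne : w q ≠ w f)
    (hpq : w p = w q) : p = q := by
  by_contra h
  have := hw.lt_or_lt_of_mem_span hfq hql hl hfl hne hpq h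
  omega

theorem AbbaFree.eq_of_twice_before (hw : AbbaFree w L) {i j i' j' q q' : ℕ}
    (hij : i < j) (hij' : i' < j') (hjq : j < q) (hjq' : j' < q) (hqq : q < q') (hq' : q' < L)
    (hi : w i = w q) (hj : w j = w q) (hi' : w i' = w q') (hj' : w j' = w q') : w q = w q' := by
  rcases lt_trichotomy i i' with hlt | rfl | hgt
  · rw [← hi, ← hi']
    exact hw hlt hij' hjq' (hqq.trans hq') hi (hi'.trans hj'.symm)
  · exact hi.symm.trans hi'
  · rw [← hi, ← hi']
    exact (hw hgt hij (hjq.trans hqq) hq' hi' (hi.trans hj.symm)).symm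

variable [DecidableEq α]

/-- The positions of the letter `a` in `w 0, …, w (L - 1)` that are less than `r` after its first
occurrence. -/
def leading (w : ℕ → α) (L r : ℕ) (a : α) : Finset ℕ :=
  {p ∈ range L | (∀ i ≤ p, w i = w p → p < i + r) ∧ w p = a}

/-- The positions `q` that lie between two occurrences of the letter at position `q + r`. -/
def enclosed (w : ℕ → α) (L r : ℕ) : Finset ℕ :=
  {q ∈ range L | q + r < L ∧ ∃ f < q, w f = w (q + r)}

/-- The positions before `q` carrying the same letter as `q`. -/
def earlier (w : ℕ → α) (q : ℕ) : Finset ℕ :=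
  {i ∈ range q | w i = w q}

/-- The enclosed positions charged to the letter `a` that they carry: those which are its first or
second occurrence. -/
def ownCharges (w : ℕ → α) (L r : ℕ) (a : α) : Finset ℕ :=
  {q ∈ enclosed w L r | #(earlier w q) ≤ 1 ∧ w q = a}

/-- The enclosed positions charged to the letter `a` enclosing them: those which are at least the
third occurrence of the letter they carry. -/
def foreignCharges (w : ℕ → α) (L r : ℕ) (a : α) : Finset ℕ :=
  {q ∈ enclosed w L r | ¬ #(earlier w q) ≤ 1 ∧ w (q + r) = a}

theorem mem_enclosed {q : ℕ} :
    q ∈ enclosed w L r ↔ q + r < L ∧ ∃ f < q, w f = w (q + r) := by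
  simp only [enclosed, mem_filter, mem_range, and_iff_right_iff_imp]
  omega

theorem mem_earlier {i q : ℕ} : i ∈ earlier w q ↔ i < q ∧ w i = w q := by
  simp only [earlier, mem_filter, mem_range]

theorem length_le_sum_card_leading_add_card_enclosed (hs : TwoSparse w L r) :
    L ≤ ∑ a ∈ (range L).image w, #(leading w L r a) + #(enclosed w L r) := by
  have hleading : #{p ∈ range L | ∀ i ≤ p, w i = w p → p < i + r} =
      ∑ a ∈ (range L).image w, #(leading w L r a) := by
    rw [card_eq_sum_card_fiberwise (f := w) (t := (range L).image w)
      fun p hp => mem_coe.2 (mem_image_of_mem w (mem_filter.1 hp).1)]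
    simp only [filter_filter, leading]
  have hlate : #{p ∈ range L | ¬ ∀ i ≤ p, w i = w p → p < i + r} ≤ #(enclosed w L r) := by
    have hshift : {p ∈ range L | ¬ ∀ i ≤ p, w i = w p → p < i + r} ⊆
        (enclosed w L r).image (· + r) := by
      intro p hp
      simp only [mem_filter, mem_range, not_forall, not_lt] at hp
      obtain ⟨hpL, i, hip, hi, hir⟩ := hp
      obtain ⟨q, rfl⟩ := Nat.exists_eq_add_of_le' (show r ≤ p by omega)
      have hiq : i ≠ q := by rintro rfl; exact hs hpL hi
      exact mem_image_of_mem _ (mem_enclosed.2 ⟨hpL, i, by omega, hi⟩)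
    exact (card_le_card hshift).trans card_image_le
  have hsplit := card_filter_add_card_filter_not (s := range L)
    fun p => ∀ i ≤ p, w i = w p → p < i + r
  rw [card_range] at hsplit
  omega

theorem card_enclosed_eq_sum_charges :
    #(enclosed w L r) = ∑ a ∈ (range L).image w, #(ownCharges w L r a) +
      ∑ a ∈ (range L).image w, #(foreignCharges w L r a) := by
  have hown : #{q ∈ enclosed w L r | #(earlier w q) ≤ 1} =
      ∑ a ∈ (range L).image w, #(ownCharges w L r a) := by
    rw [card_eq_sum_card_fiberwise (f := w) (t := (range L).image w) ?_]
    · simp only [filter_filter, ownCharges]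
    · intro q hq
      have := (mem_enclosed.1 (mem_filter.1 hq).1).1
      exact mem_coe.2 (mem_image_of_mem w (mem_range.2 (by omega)))
  have hforeign : #{q ∈ enclosed w L r | ¬ #(earlier w q) ≤ 1} =
      ∑ a ∈ (range L).image w, #(foreignCharges w L r a) := by
    rw [card_eq_sum_card_fiberwise (f := fun q => w (q + r)) (t := (range L).image w) ?_]
    · simp only [filter_filter, foreignCharges]
    · intro q hq
      exact mem_coe.2
        (mem_image_of_mem w (mem_range.2 (mem_enclosed.1 (mem_filter.1 hq).1).1))
  rw [← hown, ← hforeign, card_filter_add_card_filter_not]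

theorem exists_leading_subset_Ico (w : ℕ → α) (L r : ℕ) {a : α} {p : ℕ} (hp : w p = a) :
    ∃ f ≤ p, w f = a ∧ leading w L r a ⊆ Ico f (f + r) := by
  have hex : ∃ i, w i = a := ⟨p, hp⟩
  refine ⟨Nat.find hex, Nat.find_min' hex hp, Nat.find_spec hex, fun i hi => ?_⟩
  obtain ⟨-, hlead, hi⟩ := mem_filter.1 hi
  have hfi : Nat.find hex ≤ i := Nat.find_min' hex hi
  exact mem_Ico.2 ⟨hfi, hlead _ hfi ((Nat.find_spec hex).trans hi.symm)⟩

theorem card_leading_le (w : ℕ → α) (L r : ℕ) (a : α) : #(leading w L r a) ≤ r := by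
  obtain hempty | ⟨p, hp⟩ := (leading w L r a).eq_empty_or_nonempty
  · simp only [hempty, card_empty, zero_le]
  · obtain ⟨f, -, -, hsub⟩ := exists_leading_subset_Ico w L r (mem_filter.1 hp).2.2
    simpa only [Nat.card_Ico, add_tsub_cancel_left] using card_le_card hsub

theorem TwoSparse.exists_span (hs : TwoSparse w L r) {q : ℕ} (hq : q ∈ enclosed w L r) :
    ∃ f < q, q < q + r ∧ q + r < L ∧ w f = w (q + r) ∧ w q ≠ w (q + r) := by
  obtain ⟨hqL, f, hfq, hf⟩ := mem_enclosed.1 hq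
  have hr : r ≠ 0 := by rintro rfl; exact hs hqL rfl
  exact ⟨f, hfq, by omega, hqL, hf, hs hqL⟩

theorem AbbaFree.le_of_mem_enclosed (hw : AbbaFree w L) (hs : TwoSparse w L r) {i j q : ℕ}
    (hq : q ∈ enclosed w L r) (hi : i ∈ earlier w q) (hj : w j = w q) (hjL : j < L) : j ≤ q := by
  by_contra! hqj
  obtain ⟨f, hfq, hqr, hqL, hf, hne⟩ := hs.exists_span hq
  obtain ⟨hiq, hi⟩ := mem_earlier.1 hi
  have hspan {t : ℕ} (ht : w t = w q) (htq : t ≠ q) : t < f ∨ q + r < t :=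
    hw.lt_or_lt_of_mem_span hfq hqr hqL hf (hf ▸ hne) ht htq
  have hif : i < f := (hspan hi hiq.ne).resolve_right (by omega)
  have hrj : q + r < j := (hspan hj hqj.ne').resolve_left (by omega)
  exact hne (hi.symm.trans ((hw hif (by omega) hrj hjL (hi.trans hj.symm) hf).trans hf))

theorem AbbaFree.leading_subset_singleton (hw : AbbaFree w L) (hs : TwoSparse w L r) {q : ℕ}
    (hq : q ∈ enclosed w L r) (hfirst : earlier w q = ∅) : leading w L r (w q) ⊆ {q} := by
  intro p hp
  obtain ⟨-, hlead, hp⟩ := mem_filter.1 hp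
  by_contra hpq
  rw [mem_singleton] at hpq
  obtain ⟨f, hfq, hqr, hqL, hf, hne⟩ := hs.exists_span hq
  have hqp : ¬ p < q := fun h => notMem_empty p (hfirst ▸ mem_earlier.2 ⟨h, hp⟩)
  have hwithin : p < q + r := hlead q (by omega) hp.symm
  have := hw.lt_or_lt_of_mem_span hfq hqr hqL hf (hf ▸ hne) hp hpq
  omega

theorem card_ownCharges_le_two (w : ℕ → α) (L r : ℕ) (a : α) : #(ownCharges w L r a) ≤ 2 := by
  obtain hempty | hne := (ownCharges w L r a).eq_empty_or_nonempty
  · simp only [hempty, card_empty, zero_le]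
  obtain ⟨m, hmem, hmax⟩ := exists_max_image (ownCharges w L r a) id hne
  obtain ⟨-, hcard, hm⟩ := mem_filter.1 hmem
  have hsub : ownCharges w L r a ⊆ insert m (earlier w m) := by
    intro q hq
    rw [mem_insert, mem_earlier]
    exact (hmax q hq).eq_or_lt.imp_right
      fun hlt => ⟨hlt, (mem_filter.1 hq).2.2.trans hm.symm⟩
  have := (card_le_card hsub).trans (card_insert_le _ _)
  omega

theorem AbbaFree.card_leading_add_card_ownCharges_le (hw : AbbaFree w L) (hs : TwoSparse w L r)
    {a : α} (hne : (ownCharges w L r a).Nonempty) :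
    #(leading w L r a) + #(ownCharges w L r a) ≤ 3 := by
  by_cases hfirst : ∃ q ∈ ownCharges w L r a, earlier w q = ∅
  · obtain ⟨q, hq, hfirst⟩ := hfirst
    obtain ⟨hqenc, -, rfl⟩ := mem_filter.1 hq
    have hlead := card_le_card (hw.leading_subset_singleton hs hqenc hfirst)
    rw [card_singleton] at hlead
    have := card_ownCharges_le_two w L r (w q)
    omega
  · have hlast {p q : ℕ} (hq : q ∈ ownCharges w L r a) (hpL : p < L) (hp : w p = a) : p ≤ q := by
      obtain ⟨i, hi⟩ := nonempty_iff_ne_empty.2 fun h => hfirst ⟨q, hq, h⟩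
      obtain ⟨hqenc, -, rfl⟩ := mem_filter.1 hq
      exact hw.le_of_mem_enclosed hs hqenc hi hp hpL
    have hmem {q : ℕ} (hq : q ∈ ownCharges w L r a) : q < L ∧ w q = a := by
      obtain ⟨hqenc, -, hqa⟩ := mem_filter.1 hq
      exact ⟨mem_range.1 (mem_filter.1 hqenc).1, hqa⟩
    have hown : #(ownCharges w L r a) ≤ 1 := card_le_one.2 fun p hp q hq =>
      (hlast hq (hmem hp).1 (hmem hp).2).antisymm (hlast hp (hmem hq).1 (hmem hq).2)
    obtain ⟨q, hq⟩ := hne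
    have hsub : leading w L r a ⊆ insert q (earlier w q) := by
      intro p hp
      obtain ⟨hpL, -, hp⟩ := mem_filter.1 hp
      rw [mem_insert, mem_earlier]
      exact (hlast hq (mem_range.1 hpL) hp).eq_or_lt.imp_right
        fun hlt => ⟨hlt, hp.trans (hmem hq).2.symm⟩
    have hlead := (card_le_card hsub).trans (card_insert_le _ _)
    have hcard := (mem_filter.1 hq).2.1
    omega

theorem AbbaFree.exists_twice_before (hw : AbbaFree w L) (hs : TwoSparse w L r) {a : α} {f q : ℕ}
    (hq : q ∈ foreignCharges w L r a) (hfq : f < q) (hf : w f = a) :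
    ∃ i j, i < j ∧ j < f ∧ w i = w q ∧ w j = w q := by
  obtain ⟨hqenc, hcard, rfl⟩ := mem_filter.1 hq
  obtain ⟨-, -, hqr, hqL, -, hne⟩ := hs.exists_span hqenc
  have hbefore {t : ℕ} (ht : t ∈ earlier w q) : t < f := by
    obtain ⟨htq, ht⟩ := mem_earlier.1 ht
    exact (hw.lt_or_lt_of_mem_span hfq hqr hqL hf (hf ▸ hne) ht htq.ne).resolve_right (by omega)
  obtain ⟨i, hi, j, hj, hij⟩ := one_lt_card.1 (not_le.1 hcard)
  rcases lt_or_gt_of_ne hij with hlt | hgt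
  · exact ⟨i, j, hlt, hbefore hj, (mem_earlier.1 hi).2, (mem_earlier.1 hj).2⟩
  · exact ⟨j, i, hgt, hbefore hi, (mem_earlier.1 hj).2, (mem_earlier.1 hi).2⟩

theorem AbbaFree.card_foreignCharges_le_one (hw : AbbaFree w L) (hs : TwoSparse w L r) (a : α) :
    #(foreignCharges w L r a) ≤ 1 := by
  refine card_le_one.2 fun q hq q' hq' => ?_
  wlog hle : q ≤ q' generalizing q q'
  · exact (this q' hq' q hq (le_of_not_ge hle)).symm
  refine hle.eq_or_lt.resolve_right fun hlt => ?_
  obtain ⟨hqenc, -, hqa⟩ := mem_filter.1 hq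
  obtain ⟨hqenc', -, hqa'⟩ := mem_filter.1 hq'
  obtain ⟨f, hfq, -, -, hf, -⟩ := hs.exists_span hqenc
  obtain ⟨-, -, hqr', hqL', -, hne'⟩ := hs.exists_span hqenc'
  rw [hqa] at hf
  rw [hqa'] at hne'
  obtain ⟨i, j, hij, hjf, hi, hj⟩ := hw.exists_twice_before hs hq hfq hf
  obtain ⟨i', j', hij', hjf', hi', hj'⟩ := hw.exists_twice_before hs hq' (hfq.trans hlt) hf
  have heq : w q = w q' := hw.eq_of_twice_before hij hij' (hjf.trans hfq) (hjf'.trans hfq) hlt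
    (by omega) hi hj hi' hj'
  exact hlt.ne (hw.eq_of_mem_span hfq (by omega) (hfq.trans hlt) hqr' hqL' (hf.trans hqa'.symm)
    (hf ▸ hne') heq)

theorem AbbaFree.card_leading_add_card_foreignCharges_le (hw : AbbaFree w L)
    (hs : TwoSparse w L r) (hr : 2 ≤ r) (a : α) :
    #(leading w L r a) + #(foreignCharges w L r a) ≤ r := by
  obtain hempty | ⟨q, hq⟩ := (foreignCharges w L r a).eq_empty_or_nonempty
  · simpa only [hempty, card_empty, add_zero] using card_leading_le w L r a
  obtain ⟨hqenc, -, hqa⟩ := mem_filter.1 hq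
  obtain ⟨p, hpq, -, hqL, hp, hne⟩ := hs.exists_span hqenc
  rw [hqa] at hp hne
  obtain ⟨f, hfp, hf, hsub⟩ := exists_leading_subset_Ico w L r hp
  obtain ⟨i, j, hij, hjf, hi, -⟩ := hw.exists_twice_before hs hq (by omega) hf
  have hsucc : f + 1 ∉ leading w L r a := by
    intro hmem
    have hfsucc : w (f + 1) = a := (mem_filter.1 hmem).2.2
    have hfq : f + 1 ≠ q := by rintro rfl; exact hne hfsucc
    have := hw (hij.trans hjf) (lt_add_one f) (by omega) (by omega) hi (hf.trans hfsucc.symm)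
    exact hne (hi.symm.trans (this.trans hf))
  have hlead := card_le_card (subset_erase.2 ⟨hsub, hsucc⟩)
  rw [card_erase_of_mem (mem_Ico.2 ⟨by omega, by omega⟩), Nat.card_Ico] at hlead
  have := hw.card_foreignCharges_le_one hs a
  omega

theorem AbbaFree.card_leading_add_card_charges_le (hw : AbbaFree w L) (hs : TwoSparse w L r)
    (hr : 4 ≤ r) (a : α) :
    #(leading w L r a) + (#(ownCharges w L r a) + #(foreignCharges w L r a)) ≤ r := by
  obtain hempty | hne := (ownCharges w L r a).eq_empty_or_nonempty
  · simpa only [hempty, card_empty, zero_add] using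
      hw.card_leading_add_card_foreignCharges_le hs (by omega) a
  · have hown := hw.card_leading_add_card_ownCharges_le hs hne
    have hforeign := hw.card_foreignCharges_le_one hs a
    omega

theorem AbbaFree.length_le (hw : AbbaFree w L) (hs : TwoSparse w L r) (hr : 4 ≤ r) :
    L ≤ r * #((range L).image w) :=
  calc
    L ≤ ∑ a ∈ (range L).image w, #(leading w L r a) + #(enclosed w L r) :=
      length_le_sum_card_leading_add_card_enclosed hs
    _ = ∑ a ∈ (range L).image w,
          (#(leading w L r a) + (#(ownCharges w L r a) + #(foreignCharges w L r a))) := by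
      rw [card_enclosed_eq_sum_charges, sum_add_distrib, sum_add_distrib]
    _ ≤ ∑ _a ∈ (range L).image w, r :=
      sum_le_sum fun a _ => hw.card_leading_add_card_charges_le hs hr a
    _ = r * #((range L).image w) := by rw [sum_const, smul_eq_mul, mul_comm]

end Words

theorem contains_abba_iff {u : List ℕ} {a b : ℕ} (hab : a ≠ b) :
    Contains u [a, b, b, a] ↔ ∃ x y, x ≠ y ∧ [x, y, y, x].Sublist u := by
  constructor
  · rintro ⟨v, hv, β, hβ⟩
    have hv' : v = [β.symm a, β.symm b, β.symm b, β.symm a] := by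
      simpa using (congrArg (List.map β.symm) hβ).symm
    exact ⟨β.symm a, β.symm b, β.symm.injective.ne hab, hv' ▸ hv⟩
  · rintro ⟨x, y, hxy, hsub⟩
    obtain ⟨β, hx, hy⟩ := MulAction.is_two_pretransitive_iff.1
      (Equiv.Perm.isMultiplyPretransitive ℕ 2) hxy hab
    rw [Equiv.Perm.smul_def] at hx hy
    exact ⟨_, hsub, β, by simp only [List.map_cons, List.map_nil, hx, hy]⟩

theorem abbaFree_getD_of_not_contains {u : List ℕ} {a b : ℕ} (hab : a ≠ b)
    (h : ¬ Contains u [a, b, b, a]) : AbbaFree (fun i => u.getD i 0) u.length := by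
  intro i j k l hij hjk hkl hl hil hjk'
  by_contra hne
  have hsub : ([⟨i, by omega⟩, ⟨j, by omega⟩, ⟨k, by omega⟩, ⟨l, hl⟩] :
      List (Fin u.length)).map (u[·]) |>.Sublist u :=
    List.map_getElem_sublist (by
      simp only [List.pairwise_cons, List.mem_cons, List.not_mem_nil, Fin.ext_iff, Fin.lt_def]
      grind)
  refine h ((contains_abba_iff hab).2 ⟨_, _, hne, ?_⟩)
  have hget {m : ℕ} (hm : m ≤ l) : u.getD m 0 = u[m] := List.getD_eq_getElem u 0 (by omega)
  simp only [hget (show i ≤ l by omega), hget (show j ≤ l by omega), hget hkl.le, hget le_rfl]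
    at hil hjk' ⊢
  simpa only [List.map_cons, List.map_nil, Fin.getElem_fin, ← hil, ← hjk'] using hsub

theorem ArithSparse.twoSparse_getD {k r : ℕ} {u : List ℕ} (hu : ArithSparse k r u) (hk : 2 ≤ k) :
    TwoSparse (fun i => u.getD i 0) u.length r := by
  intro j hj
  simpa using hu j 0 1 zero_lt_one hk (by simpa using hj)

theorem image_getD_subset_toFinset (u : List ℕ) (d : ℕ) :
    (range u.length).image (fun i => u.getD i d) ⊆ u.toFinset := by
  refine image_subset_iff.2 fun i hi => List.mem_toFinset.2 ?_
  rw [List.getD_eq_getElem _ _ (mem_range.1 hi)]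
  exact List.getElem_mem _

theorem length_le_of_not_contains_abba {u : List ℕ} {a b k r : ℕ} (hab : a ≠ b) (hk : 2 ≤ k)
    (hr : 4 ≤ r) (hfree : ¬ Contains u [a, b, b, a]) (hu : ArithSparse k r u) :
    u.length ≤ r * #u.toFinset :=
  ((abbaFree_getD_of_not_contains hab hfree).length_le (hu.twoSparse_getD hk) hr).trans
    (Nat.mul_le_mul_left r (card_le_card (image_getD_subset_toFinset u 0)))

theorem not_contains_abba_of_pairwise_le {u : List ℕ} {a b : ℕ} (hab : a ≠ b)
    (hu : u.Pairwise (· ≤ ·)) : ¬ Contains u [a, b, b, a] := by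
  rw [contains_abba_iff hab]
  rintro ⟨x, y, hxy, hsub⟩
  have := hu.sublist hsub
  simp only [List.pairwise_cons, List.mem_cons] at this
  exact hxy ((this.1 y (by simp)).antisymm (this.2.1 x (by simp)))

/-- The word `0⋯0 1⋯1 ⋯ (n-1)⋯(n-1)` with each letter repeated `r` times. -/
def blockWord (r n : ℕ) : List ℕ :=
  (List.range (r * n)).map (· / r)

theorem length_blockWord (r n : ℕ) : (blockWord r n).length = r * n := by
  simp only [blockWord, List.length_map, List.length_range]

theorem pairwise_le_blockWord (r n : ℕ) : (blockWord r n).Pairwise (· ≤ ·) :=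
  List.pairwise_map.2 (List.pairwise_le_range.imp (Nat.div_le_div_right (c := r)))

theorem getD_blockWord {r n i : ℕ} (hi : i < r * n) (d : ℕ) : (blockWord r n).getD i d = i / r := by
  rw [List.getD_eq_getElem _ _ ((length_blockWord r n).symm ▸ hi)]
  simp only [blockWord, List.getElem_map, List.getElem_range]

theorem arithSparse_blockWord {r : ℕ} (hr : 0 < r) (k n : ℕ) :
    ArithSparse k r (blockWord r n) := by
  intro j s t hst _ ht
  rw [length_blockWord] at ht
  have hs : j + s * r < r * n := lt_of_le_of_lt (by gcongr) ht
  rw [getD_blockWord hs, getD_blockWord ht, Nat.add_mul_div_right _ _ hr,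
    Nat.add_mul_div_right _ _ hr]
  omega

theorem card_toFinset_blockWord_le (r n : ℕ) : #(blockWord r n).toFinset ≤ n := by
  have hsub : (blockWord r n).toFinset ⊆ range n := by
    intro x hx
    obtain ⟨i, hi, rfl⟩ := List.mem_map.1 (List.mem_toFinset.1 hx)
    exact mem_range.2 (Nat.div_lt_of_lt_mul (List.mem_range.1 hi))
  simpa only [card_range] using card_le_card hsub

theorem stmt_15_general {a b k r : ℕ} (hab : a ≠ b) (hk : 2 ≤ k) (hr : 4 ≤ r) (n : ℕ) :
    Ex [a, b, b, a] k r n = r * n := by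
  refine IsGreatest.csSup_eq ⟨⟨blockWord r n, length_blockWord r n,
    not_contains_abba_of_pairwise_le hab (pairwise_le_blockWord r n),
    arithSparse_blockWord (by omega) k n, card_toFinset_blockWord_le r n⟩, ?_⟩
  rintro _ ⟨u, rfl, hfree, hsparse, hcard⟩
  exact (length_le_of_not_contains_abba hab hk hr hfree hsparse).trans
    (Nat.mul_le_mul_left r hcard)

theorem stmt_15 (a b : ℕ) (hab : a ≠ b) (k r : ℕ) (hk : 2 ≤ k) (hr : 5 ≤ r) :
    ∀ n : ℕ, 1 ≤ n → Ex [a, b, b, a] k r n = r * n :=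
  fun n _ => stmt_15_general hab hk (by omega) n
end
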